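/- arXiv:0912.4706 — 10 statements merged into one kernel-verified Lean document; each statement's English description precedes it below -/
import Mathlib

section
/- Let λ₁, λ₂, λ₃ be lagrangian subspaces of a finite-dimensional symplectic vector space (V, ω) over ℚ. Suppose a, b ∈ (λ₁ + λ₂) ∩ λ₃ admit decompositions a = a₁ + a₂ = a₁' + a₂' and b = b₁ + b₂ = b₁' + b₂' with a₁, a₁', b₁, b₁' ∈ λ₁ and a₂, a₂', b₂, b₂' ∈ λ₂. Then ω(a₂, b₁) = ω(a₂', b₁'). In other words, the bilinear form ⊙ on (λ₁ + λ₂) ∩ λ₃ defined by (a₁ + a₂) ⊙ (b₁ + b₂) = ω(a₂, b₁) is well-defined (independent of the chosen decompositions). -/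
open Module

/-- `perp ω W` is the subspace `{x ∈ V : ω(x,y) = 0 for all y ∈ W}`. -/
def perp {K V : Type*} [Field K] [AddCommGroup V] [Module K V]
    (ω : LinearMap.BilinForm K V) (W : Submodule K V) : Submodule K V where
  carrier := {x | ∀ y ∈ W, ω x y = 0}
  add_mem' := by
    intro a b ha hb y hy
    simp only [Set.mem_setOf_eq] at ha hb ⊢
    simp [map_add, LinearMap.add_apply, ha y hy, hb y hy]
  zero_mem' := by
    intro y hy
    simp
  smul_mem' := by
    intro c a ha y hy
    simp only [Set.mem_setOf_eq] at ha ⊢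
    simp [map_smul, LinearMap.smul_apply, ha y hy]

/-- If `λ₁, λ₂, λ₃` are lagrangians of a finite-dimensional symplectic `ℚ`-vector space,
and `a, b ∈ (λ₁ + λ₂) ∩ λ₃` have decompositions `a = a₁ + a₂ = a₁' + a₂'` and
`b = b₁ + b₂ = b₁' + b₂'` with first summands in `λ₁` and second summands in `λ₂`,
then `ω(a₂, b₁) = ω(a₂', b₁')`: the form `(a₁+a₂) ⊙ (b₁+b₂) = ω(a₂, b₁)` on
`(λ₁ + λ₂) ∩ λ₃` is well-defined. -/
theorem maslov_form_well_defined
    {V : Type*} [AddCommGroup V] [Module ℚ V] [FiniteDimensional ℚ V]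
    (ω : LinearMap.BilinForm ℚ V)
    (hnd : ∀ x : V, (∀ y : V, ω x y = 0) → x = 0)
    (halt : ∀ x : V, ω x x = 0)
    (l1 l2 l3 : Submodule ℚ V)
    (h1 : l1 = perp ω l1) (h2 : l2 = perp ω l2) (h3 : l3 = perp ω l3)
    (a b : V)
    (ha : a ∈ (l1 ⊔ l2) ⊓ l3) (hb : b ∈ (l1 ⊔ l2) ⊓ l3)
    (a1 a2 a1' a2' b1 b2 b1' b2' : V)
    (ha1 : a1 ∈ l1) (ha1' : a1' ∈ l1) (hb1 : b1 ∈ l1) (hb1' : b1' ∈ l1)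
    (ha2 : a2 ∈ l2) (ha2' : a2' ∈ l2) (hb2 : b2 ∈ l2) (hb2' : b2' ∈ l2)
    (hda : a = a1 + a2) (hda' : a = a1' + a2')
    (hdb : b = b1 + b2) (hdb' : b = b1' + b2') :
    ω a2 b1 = ω a2' b1' := by
  have e1 : a2 - a2' = a1' - a1 := by
    rw [sub_eq_sub_iff_add_eq_add, add_comm, ← hda, hda']
  have e2 : b1 - b1' = b2' - b2 := by
    rw [sub_eq_sub_iff_add_eq_add, ← hdb, hdb', add_comm]
  have i1 : ∀ x ∈ l1, ∀ y ∈ l1, ω x y = 0 := fun x hx => by rw [h1] at hx; exact hx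
  have i2 : ∀ x ∈ l2, ∀ y ∈ l2, ω x y = 0 := fun x hx => by rw [h2] at hx; exact hx
  -- `a2 - a2'` and `b1 - b1'` lie in both `l1` and `l2`, which are isotropic.
  calc ω a2 b1 = ω a2' b1 := by
        rw [← sub_eq_zero, ← LinearMap.sub_apply, ← map_sub, e1]
        exact i1 _ (l1.sub_mem ha1' ha1) _ hb1
    _ = ω a2' b1' := by
        rw [← sub_eq_zero, ← map_sub, e2]
        exact i2 _ ha2' _ (l2.sub_mem hb2' hb2)
end

section
/- Let λ₁, λ₂, λ₃ be lagrangian subspaces of a finite-dimensional symplectic vector space (V, ω) over ℚ. If a = a₁ + a₂ and b = b₁ + b₂ are elements of (λ₁ + λ₂) ∩ λ₃ with a₁, b₁ ∈ λ₁ and a₂, b₂ ∈ λ₂, then ω(a₂, b₁) = ω(b₂, a₁). In other words, the bilinear form ⊙ on (λ₁ + λ₂) ∩ λ₃ defined by (a₁ + a₂) ⊙ (b₁ + b₂) = ω(a₂, b₁) is symmetric. -/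
open Module

/-- If `λ₁, λ₂, λ₃` are lagrangians of a finite-dimensional symplectic `ℚ`-vector space,
and `a = a₁ + a₂` and `b = b₁ + b₂` are elements of `(λ₁ + λ₂) ∩ λ₃` with
`a₁, b₁ ∈ λ₁` and `a₂, b₂ ∈ λ₂`, then `ω(a₂, b₁) = ω(b₂, a₁)`: the form
`(a₁+a₂) ⊙ (b₁+b₂) = ω(a₂, b₁)` on `(λ₁ + λ₂) ∩ λ₃` is symmetric. -/
theorem maslov_form_symmetric
    {V : Type*} [AddCommGroup V] [Module ℚ V] [FiniteDimensional ℚ V]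
    (ω : LinearMap.BilinForm ℚ V)
    (hnd : ∀ x : V, (∀ y : V, ω x y = 0) → x = 0)
    (halt : ∀ x : V, ω x x = 0)
    (l1 l2 l3 : Submodule ℚ V)
    (h1 : l1 = perp ω l1) (h2 : l2 = perp ω l2) (h3 : l3 = perp ω l3)
    (a b : V)
    (ha : a ∈ (l1 ⊔ l2) ⊓ l3) (hb : b ∈ (l1 ⊔ l2) ⊓ l3)
    (a1 a2 b1 b2 : V)
    (ha1 : a1 ∈ l1) (hb1 : b1 ∈ l1) (ha2 : a2 ∈ l2) (hb2 : b2 ∈ l2)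
    (hda : a = a1 + a2) (hdb : b = b1 + b2) :
    ω a2 b1 = ω b2 a1 := by
  -- Expand `0 = ω(a, b)` (as `λ₃` is isotropic); isotropy of `λ₁`, `λ₂` kills the diagonal terms,
  -- and the alternating property turns `ω(a₁, b₂)` into `-ω(b₂, a₁)`.
  have isotropic : ∀ {l : Submodule ℚ V}, l = perp ω l → ∀ {x y : V}, x ∈ l → y ∈ l →
      ω x y = 0 := by
    intro l h x y hx hy
    rw [h] at hx
    exact hx y hy
  have hab := isotropic h3 ha.2 hb.2
  have hskew : -ω a1 b2 = ω b2 a1 := LinearMap.IsAlt.neg halt a1 b2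
  simp only [hda, hdb, map_add, LinearMap.add_apply, isotropic h1 ha1 hb1,
    isotropic h2 ha2 hb2] at hab
  linarith
end

section
/- Let (V, ω) be a finite-dimensional real symplectic vector space and let λ₁, λ₂, λ₃ be lagrangian subspaces. For every permutation σ of {1,2,3}, the Maslov index satisfies μ(λ_{σ(1)}, λ_{σ(2)}, λ_{σ(3)}) = sign(σ) · μ(λ₁, λ₂, λ₃); in particular, the Maslov index changes sign under an odd permutation of the three lagrangians, and μ(λ₁, λ₂, λ₃) = 0 whenever two of the three lagrangians are equal. -/
/-!
The signature is monotone under isometries: a linear map `h : W → W'` with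
`C (h x) (h x) = B x x`, injective or not, forces `B` to have at most as many positive diagonal
entries as `C`, because a vector of a positive definite subspace whose image has zero
coordinates at the positive diagonal entries of `C` must vanish (`card_pos_le`). Isometries in
both directions therefore force equal signatures (`HasSignature.unique`), which contains Sylvester's law of inertia.

Two transpositions generate all permutations. Exchanging `λ₁` and `λ₂` keeps the space
`(λ₁ + λ₂) ∩ λ₃` and negates the form, since `λ₁`, `λ₂`, `λ₃` are isotropic
(`HasMaslovIndex.swap12`). For exchanging `λ₂` and `λ₃`, choose linearly a decomposition
`x = a₁ + a₂` for `x ∈ (λ₁ + λ₂) ∩ λ₃`; then `a₂ = -a₁ + x` lies in `(λ₁ + λ₃) ∩ λ₂`, and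
`a₂ ⊙ a₂ = ω(x, -a₁) = -ω(a₂, a₁) = -(x ⊙ x)`, so `x ↦ a₂` carries one form to
the negative of the other, and the same construction works backwards (`HasMaslovIndex.swap23`).

If two of the lagrangians coincide, the corresponding transposition fixes the triple, so `m = -m`.
-/

open Module

/-- A symmetric bilinear form on a real vector space has signature `s` if some basis
diagonalizes it with `s` = (number of positive diagonal entries) − (number of negative
ones); by Sylvester's law of inertia this does not depend on the diagonalizing basis. -/
def HasSignature {W : Type*} [AddCommGroup W] [Module ℝ W]
    (B : LinearMap.BilinForm ℝ W) (s : ℤ) : Prop :=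
  ∃ (n : ℕ) (b : Basis (Fin n) ℝ W),
    (∀ i j, i ≠ j → B (b i) (b j) = 0) ∧
    s = (Nat.card {i : Fin n // 0 < B (b i) (b i)} : ℤ)
      - (Nat.card {i : Fin n // B (b i) (b i) < 0} : ℤ)

/-- `B` is the bilinear form `⊙` on `(λ₁ + λ₂) ∩ λ₃` defined by
`(a₁ + a₂) ⊙ (b₁ + b₂) = ω(a₂, b₁)` where `aᵢ, bᵢ ∈ λᵢ`. -/
def IsMaslovForm {V : Type*} [AddCommGroup V] [Module ℝ V]
    (ω : LinearMap.BilinForm ℝ V) (l1 l2 l3 : Submodule ℝ V)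
    (B : LinearMap.BilinForm ℝ ↥((l1 ⊔ l2) ⊓ l3)) : Prop :=
  ∀ (a b : ↥((l1 ⊔ l2) ⊓ l3)) (a1 a2 b1 b2 : V),
    a1 ∈ l1 → a2 ∈ l2 → b1 ∈ l1 → b2 ∈ l2 →
    (a : V) = a1 + a2 → (b : V) = b1 + b2 →
    B a b = ω a2 b1

/-- The Maslov index `μ(λ₁, λ₂, λ₃)` is the signature of the form `⊙` on
`(λ₁ + λ₂) ∩ λ₃`. -/
def HasMaslovIndex {V : Type*} [AddCommGroup V] [Module ℝ V]
    (ω : LinearMap.BilinForm ℝ V) (l1 l2 l3 : Submodule ℝ V) (m : ℤ) : Prop :=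
  ∃ B, IsMaslovForm ω l1 l2 l3 B ∧ HasSignature B m

lemma apply_self_eq_sum {W : Type*} [AddCommGroup W] [Module ℝ W]
    (B : LinearMap.BilinForm ℝ W) {n : ℕ} (b : Basis (Fin n) ℝ W)
    (hb : ∀ i j, i ≠ j → B (b i) (b j) = 0) (x : W) :
    B x x = ∑ i, (b.repr x i) ^ 2 * B (b i) (b i) := by
  conv_lhs => rw [← b.sum_repr x]
  simp only [map_sum, LinearMap.sum_apply, map_smul, LinearMap.smul_apply, smul_eq_mul]
  refine Finset.sum_congr rfl fun i _ => ?_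
  rw [Finset.sum_eq_single i]
  · ring
  · intro j _ hj
    simp [hb j i hj]
  · simp

/-- The inertia inequality: `h` need not be injective, but it is so on a positive definite
subspace. -/
lemma card_pos_le {W W' : Type*} [AddCommGroup W] [Module ℝ W] [AddCommGroup W'] [Module ℝ W']
    (B : LinearMap.BilinForm ℝ W) (C : LinearMap.BilinForm ℝ W')
    {n k : ℕ} (b : Basis (Fin n) ℝ W) (c : Basis (Fin k) ℝ W')
    (hb : ∀ i j, i ≠ j → B (b i) (b j) = 0) (hc : ∀ i j, i ≠ j → C (c i) (c j) = 0)
    (h : W →ₗ[ℝ] W') (hh : ∀ x, C (h x) (h x) = B x x) :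
    Nat.card {i : Fin n // 0 < B (b i) (b i)} ≤ Nat.card {i : Fin k // 0 < C (c i) (c i)} := by
  classical
  -- Embed the span of the positive `b i`, map by `h`, and keep the positive `c`-coordinates.
  let emb : ({i : Fin n // 0 < B (b i) (b i)} → ℝ) →ₗ[ℝ] W :=
    Fintype.linearCombination ℝ (fun i : {i : Fin n // 0 < B (b i) (b i)} => b i)
  let res : W' →ₗ[ℝ] ({i : Fin k // 0 < C (c i) (c i)} → ℝ) :=
    LinearMap.pi fun j => c.coord j
  have hinj : Function.Injective (res ∘ₗ h ∘ₗ emb) := by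
    rw [← LinearMap.ker_eq_bot, LinearMap.ker_eq_bot']
    intro v hv
    have hC : C (h (emb v)) (h (emb v)) ≤ 0 := by
      rw [apply_self_eq_sum C c hc]
      refine Finset.sum_nonpos fun j _ => ?_
      by_cases hj : 0 < C (c j) (c j)
      · have : c.repr (h (emb v)) j = 0 := congrFun hv ⟨j, hj⟩
        simp [this]
      · exact mul_nonpos_of_nonneg_of_nonpos (sq_nonneg _) (not_lt.mp hj)
    have hB : B (emb v) (emb v) = ∑ i : {i : Fin n // 0 < B (b i) (b i)},
        v i ^ 2 * B (b i) (b i) := by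
      simp only [emb, Fintype.linearCombination_apply, map_sum, LinearMap.sum_apply, map_smul,
        LinearMap.smul_apply, smul_eq_mul]
      refine Finset.sum_congr rfl fun i _ => ?_
      rw [Finset.sum_eq_single i]
      · ring
      · intro j _ hj
        simp [hb j i (fun e => hj (Subtype.ext e))]
      · simp
    rw [hh, hB] at hC
    have hnn : ∀ i ∈ (Finset.univ : Finset {i : Fin n // 0 < B (b i) (b i)}),
        0 ≤ v i ^ 2 * B (b i) (b i) := fun i _ => mul_nonneg (sq_nonneg _) i.2.le
    have h0 := (Finset.sum_eq_zero_iff_of_nonneg hnn).mp (le_antisymm hC (Finset.sum_nonneg hnn))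
    funext i
    have := h0 i (Finset.mem_univ i)
    simpa [i.2.ne'] using this
  have := LinearMap.finrank_le_finrank_of_injective hinj
  simpa [Nat.card_eq_fintype_card] using this

lemma HasSignature.neg {W : Type*} [AddCommGroup W] [Module ℝ W]
    {B : LinearMap.BilinForm ℝ W} {s : ℤ} (h : HasSignature B s) : HasSignature (-B) (-s) := by
  obtain ⟨n, b, hb, rfl⟩ := h
  refine ⟨n, b, fun i j hij => by simp [hb i j hij], ?_⟩
  simp

/-- Sylvester's law of inertia, for two forms with isometries (not assumed injective) both ways. -/
lemma HasSignature.unique {W W' : Type*} [AddCommGroup W] [Module ℝ W]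
    [AddCommGroup W'] [Module ℝ W']
    {B : LinearMap.BilinForm ℝ W} {C : LinearMap.BilinForm ℝ W'} {s t : ℤ}
    (hB : HasSignature B s) (hC : HasSignature C t)
    (f : W →ₗ[ℝ] W') (hf : ∀ x, C (f x) (f x) = B x x)
    (g : W' →ₗ[ℝ] W) (hg : ∀ x, B (g x) (g x) = C x x) : s = t := by
  obtain ⟨n, b, hb, rfl⟩ := hB
  obtain ⟨k, c, hc, rfl⟩ := hC
  have hb' : ∀ i j, i ≠ j → (-B) (b i) (b j) = 0 := fun i j hij => by simp [hb i j hij]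
  have hc' : ∀ i j, i ≠ j → (-C) (c i) (c j) = 0 := fun i j hij => by simp [hc i j hij]
  have h1 := card_pos_le B C b c hb hc f hf
  have h2 := card_pos_le C B c b hc hb g hg
  have h3 := card_pos_le (-B) (-C) b c hb' hc' f (by simpa using hf)
  have h4 := card_pos_le (-C) (-B) c b hc' hb' g (by simpa using hg)
  simp only [LinearMap.neg_apply, neg_pos] at h3 h4
  omega

section Maslov

variable {V : Type*} [AddCommGroup V] [Module ℝ V] {ω : LinearMap.BilinForm ℝ V}
  {l1 l2 l3 : Submodule ℝ V} {m m' : ℤ}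

lemma IsMaslovForm.apply_self_eq {B C : LinearMap.BilinForm ℝ ↥((l1 ⊔ l2) ⊓ l3)}
    (hB : IsMaslovForm ω l1 l2 l3 B) (hC : IsMaslovForm ω l1 l2 l3 C)
    (x : ↥((l1 ⊔ l2) ⊓ l3)) : B x x = C x x := by
  obtain ⟨a1, h1, a2, h2, h⟩ := Submodule.mem_sup.mp x.2.1
  rw [hB x x a1 a2 a1 a2 h1 h2 h1 h2 h.symm h.symm, hC x x a1 a2 a1 a2 h1 h2 h1 h2 h.symm h.symm]

lemma HasMaslovIndex.unique (h : HasMaslovIndex ω l1 l2 l3 m)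
    (h' : HasMaslovIndex ω l1 l2 l3 m') : m = m' := by
  obtain ⟨B, hB, hs⟩ := h
  obtain ⟨C, hC, ht⟩ := h'
  exact hs.unique ht LinearMap.id (hC.apply_self_eq hB) LinearMap.id (hB.apply_self_eq hC)

lemma HasMaslovIndex.swap12
    (i1 : ∀ x ∈ l1, ∀ y ∈ l1, ω x y = 0) (i2 : ∀ x ∈ l2, ∀ y ∈ l2, ω x y = 0)
    (i3 : ∀ x ∈ l3, ∀ y ∈ l3, ω x y = 0)
    (h : HasMaslovIndex ω l1 l2 l3 m) : HasMaslovIndex ω l2 l1 l3 (-m) := by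
  obtain ⟨B, hB, hs⟩ := h
  let e : ↥((l2 ⊔ l1) ⊓ l3) ≃ₗ[ℝ] ↥((l1 ⊔ l2) ⊓ l3) :=
    LinearEquiv.ofEq _ _ (by rw [sup_comm])
  refine ⟨-(B.comp e.toLinearMap e.toLinearMap), ?_, HasSignature.neg ?_⟩
  · intro a b a1 a2 b1 b2 ha1 ha2 hb1 hb2 ha hb
    have h1 : B (e a) (e b) = ω a1 b2 :=
      hB (e a) (e b) a2 a1 b2 b1 ha2 ha1 hb2 hb1 (by rw [add_comm]; exact ha)
        (by rw [add_comm]; exact hb)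
    have h2 : ω (a1 + a2) (b1 + b2) = 0 := by
      rw [← ha, ← hb]
      exact i3 _ a.2.2 _ b.2.2
    simp only [map_add, LinearMap.add_apply, i2 a1 ha1 b1 hb1, i1 a2 ha2 b2 hb2] at h2
    simp only [LinearMap.neg_apply, LinearMap.BilinForm.comp_apply, LinearEquiv.coe_coe, h1]
    linarith
  · obtain ⟨n, b, hb, hs⟩ := hs
    refine ⟨n, b.map e.symm, fun i j hij => by simpa using hb i j hij, ?_⟩
    simpa using hs

/-- A linear choice `h x` of the `l2`-component of the elements `x` of `(l1 + l2) ∩ l3`; it lies in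
`l1 + l3` because `x ∈ l3`. -/
lemma exists_component (l1 l2 l3 : Submodule ℝ V) :
    ∃ h : ↥((l1 ⊔ l2) ⊓ l3) →ₗ[ℝ] ↥((l1 ⊔ l3) ⊓ l2),
      ∀ x : ↥((l1 ⊔ l2) ⊓ l3), ∃ a ∈ l1, (x : V) = a + h x := by
  let sumMap : (l1 × l2) →ₗ[ℝ] ↥(l1 ⊔ l2) :=
    (l1.subtype.coprod l2.subtype).codRestrict _ fun p =>
      Submodule.add_mem_sup p.1.2 p.2.2
  have hsurj : LinearMap.range sumMap = ⊤ := by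
    rw [LinearMap.range_eq_top]
    intro x
    obtain ⟨a, ha, b, hb, h⟩ := Submodule.mem_sup.mp x.2
    exact ⟨(⟨a, ha⟩, ⟨b, hb⟩), Subtype.ext h⟩
  obtain ⟨s, hs⟩ := sumMap.exists_rightInverse_of_surjective hsurj
  let s' : ↥((l1 ⊔ l2) ⊓ l3) →ₗ[ℝ] l1 × l2 := s ∘ₗ Submodule.inclusion inf_le_left
  have hs' : ∀ x : ↥((l1 ⊔ l2) ⊓ l3), (x : V) = (s' x).1 + (s' x).2 := fun x =>
    (congrArg Subtype.val (LinearMap.congr_fun hs (Submodule.inclusion inf_le_left x))).symm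
  refine ⟨(l2.subtype ∘ₗ LinearMap.snd ℝ l1 l2 ∘ₗ s').codRestrict _ fun x => ⟨?_, (s' x).2.2⟩,
    fun x => ⟨(s' x).1, (s' x).1.2, hs' x⟩⟩
  have : ((s' x).2 : V) = -((s' x).1 : V) + x := by rw [hs' x]; abel
  change ((s' x).2 : V) ∈ l1 ⊔ l3
  rw [this]
  exact Submodule.add_mem_sup (l1.neg_mem (s' x).1.2) x.2.2

lemma exists_antiIsometry (i1 : ∀ x ∈ l1, ∀ y ∈ l1, ω x y = 0)
    {B : LinearMap.BilinForm ℝ ↥((l1 ⊔ l2) ⊓ l3)} {C : LinearMap.BilinForm ℝ ↥((l1 ⊔ l3) ⊓ l2)}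
    (hB : IsMaslovForm ω l1 l2 l3 B) (hC : IsMaslovForm ω l1 l3 l2 C) :
    ∃ h : ↥((l1 ⊔ l2) ⊓ l3) →ₗ[ℝ] ↥((l1 ⊔ l3) ⊓ l2), ∀ x, C (h x) (h x) = -B x x := by
  obtain ⟨h, hh⟩ := exists_component l1 l2 l3
  refine ⟨h, fun x => ?_⟩
  obtain ⟨a, ha, hx⟩ := hh x
  have hx' : (h x : V) = -a + x := by rw [hx]; abel
  rw [hB x x a (h x) a (h x) ha (h x).2.2 ha (h x).2.2 hx hx,
    hC (h x) (h x) (-a) x (-a) x (l1.neg_mem ha) x.2.2 (l1.neg_mem ha) x.2.2 hx' hx', map_neg,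
    hx, map_add, LinearMap.add_apply, i1 a ha a ha, zero_add]

lemma HasMaslovIndex.swap23 (i1 : ∀ x ∈ l1, ∀ y ∈ l1, ω x y = 0)
    (h : HasMaslovIndex ω l1 l2 l3 m) (h' : HasMaslovIndex ω l1 l3 l2 m') : m' = -m := by
  obtain ⟨B, hB, hs⟩ := h
  obtain ⟨C, hC, ht⟩ := h'
  obtain ⟨f, hf⟩ := exists_antiIsometry i1 hB hC
  obtain ⟨g, hg⟩ := exists_antiIsometry i1 hC hB
  exact ht.unique hs.neg g (fun x => by simp [hg]) f (fun x => by simp [hf])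

/-- The transformation rule for all permutations. As `swap23` compares two given indices while
`swap12` produces one, the 3-cycles are reached by applying `swap12` to one of the two triples. -/
lemma HasMaslovIndex.perm (lam : Fin 3 → Submodule ℝ V)
    (iso : ∀ i, ∀ x ∈ lam i, ∀ y ∈ lam i, ω x y = 0) (σ : Equiv.Perm (Fin 3))
    (h : HasMaslovIndex ω (lam 0) (lam 1) (lam 2) m)
    (h' : HasMaslovIndex ω (lam (σ 0)) (lam (σ 1)) (lam (σ 2)) m') :
    m' = (Equiv.Perm.sign σ : ℤ) * m := by
  have hcases : ∀ σ : Equiv.Perm (Fin 3),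
      (σ 0 = 0 ∧ σ 1 = 1 ∧ σ 2 = 2 ∧ Equiv.Perm.sign σ = 1) ∨
      (σ 0 = 0 ∧ σ 1 = 2 ∧ σ 2 = 1 ∧ Equiv.Perm.sign σ = -1) ∨
      (σ 0 = 1 ∧ σ 1 = 0 ∧ σ 2 = 2 ∧ Equiv.Perm.sign σ = -1) ∨
      (σ 0 = 1 ∧ σ 1 = 2 ∧ σ 2 = 0 ∧ Equiv.Perm.sign σ = 1) ∨
      (σ 0 = 2 ∧ σ 1 = 0 ∧ σ 2 = 1 ∧ Equiv.Perm.sign σ = 1) ∨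
      (σ 0 = 2 ∧ σ 1 = 1 ∧ σ 2 = 0 ∧ Equiv.Perm.sign σ = -1) := by decide
  have hr := h.swap12 (iso _) (iso _) (iso _)
  have hr' := h'.swap12 (iso _) (iso _) (iso _)
  rcases hcases σ with ⟨e0, e1, e2, e⟩ | ⟨e0, e1, e2, e⟩ | ⟨e0, e1, e2, e⟩ | ⟨e0, e1, e2, e⟩ |
    ⟨e0, e1, e2, e⟩ | ⟨e0, e1, e2, e⟩ <;> rw [e0, e1, e2] at h' hr' <;> rw [e] <;>
    simp only [Units.val_one, Units.val_neg, one_mul, neg_mul]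
  · exact h'.unique h
  · exact h.swap23 (iso _) h'
  · exact h'.unique hr
  · linarith [hr.swap23 (iso _) h']
  · linarith [h.swap23 (iso _) hr']
  · linarith [hr.swap23 (iso _) hr']

end Maslov

/-- For lagrangians `λ₁, λ₂, λ₃` of a finite-dimensional real symplectic vector space
and a permutation `σ` of `{0,1,2}`, one has
`μ(λ_{σ 0}, λ_{σ 1}, λ_{σ 2}) = sign(σ) · μ(λ₀, λ₁, λ₂)`; in particular the Maslov index
vanishes whenever two of the three lagrangians coincide. -/
theorem maslov_index_antisymmetric
    {V : Type*} [AddCommGroup V] [Module ℝ V] [FiniteDimensional ℝ V]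
    (ω : LinearMap.BilinForm ℝ V)
    (hnd : ∀ x : V, (∀ y : V, ω x y = 0) → x = 0)
    (halt : ∀ x : V, ω x x = 0)
    (lam : Fin 3 → Submodule ℝ V)
    (hlag : ∀ i, lam i = perp ω (lam i))
    (σ : Equiv.Perm (Fin 3))
    (m mσ : ℤ)
    (hm : HasMaslovIndex ω (lam 0) (lam 1) (lam 2) m)
    (hmσ : HasMaslovIndex ω (lam (σ 0)) (lam (σ 1)) (lam (σ 2)) mσ) :
    mσ = (Equiv.Perm.sign σ : ℤ) * m ∧
      ((∃ i j, i ≠ j ∧ lam i = lam j) → m = 0) := by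
  have iso : ∀ i, ∀ x ∈ lam i, ∀ y ∈ lam i, ω x y = 0 := by
    intro i x hx
    rw [hlag i] at hx
    exact hx
  refine ⟨hm.perm lam iso σ hmσ, ?_⟩
  rintro ⟨i, j, hij, h⟩
  -- The transposition of `i` and `j` is odd and fixes the triple.
  have hl : ∀ k, lam (Equiv.swap i j k) = lam k := by
    intro k
    rw [Equiv.swap_apply_def]
    split_ifs with h1 h2
    · rw [h1, h]
    · rw [h2, h]
    · rfl
  have hself := hm.perm (m' := m) lam iso (Equiv.swap i j) (by simpa only [hl] using hm)
  rw [Equiv.Perm.sign_swap hij] at hself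
  simp only [Units.val_neg, Units.val_one, neg_mul, one_mul] at hself
  linarith
end

section
/- Let f be a symplectic automorphism of a finite-dimensional symplectic vector space (V, ω) over ℚ. If x ∈ V satisfies f(x) = x, then ω(x, b) = 0 for every b in the image (f − 1)V. Consequently, for a ∈ (f − 1)V and b ∈ (f − 1)V, the value ω(x, b), where x is any vector with (f − 1)x = a, does not depend on the choice of x; that is, Turaev's form a ⋆_f b = ω((f − 1)^{-1}(a), b) is a well-defined bilinear form on (f − 1)V. -/
open Module

/-- For a symplectic automorphism `f` of a finite-dimensional symplectic `ℚ`-vector space: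
(1) if `f x = x` then `ω(x, b) = 0` for every `b ∈ (f − 1)V`; consequently
(2) for `b ∈ (f − 1)V`, the value `ω(x, b)` does not depend on the choice of preimage `x`
of a fixed `a` under `f − 1`, i.e. Turaev's form `a ⋆_f b = ω((f−1)⁻¹ a, b)` is
well-defined on `(f − 1)V`. -/
theorem turaev_form_well_defined
    {V : Type*} [AddCommGroup V] [Module ℚ V] [FiniteDimensional ℚ V]
    (ω : LinearMap.BilinForm ℚ V)
    (hnd : ∀ x : V, (∀ y : V, ω x y = 0) → x = 0)
    (halt : ∀ x : V, ω x x = 0)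
    (f : V ≃ₗ[ℚ] V)
    (hf : ∀ x y : V, ω (f x) (f y) = ω x y) :
    (∀ x : V, f x = x →
      ∀ b ∈ LinearMap.range ((f : V →ₗ[ℚ] V) - LinearMap.id), ω x b = 0) ∧
    (∀ b x x' : V, b ∈ LinearMap.range ((f : V →ₗ[ℚ] V) - LinearMap.id) →
      f x - x = f x' - x' → ω x b = ω x' b) := by
  have key : ∀ x : V, f x = x →
      ∀ b ∈ LinearMap.range ((f : V →ₗ[ℚ] V) - LinearMap.id), ω x b = 0 := by
    rintro x hx b ⟨y, rfl⟩
    -- `ω(x, f y) = ω(f x, f y) = ω(x, y)`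
    have h := hf x y
    rw [hx] at h
    simp [h]
  refine ⟨key, fun b x x' hb h => ?_⟩
  -- two preimages of the same vector under `f - 1` differ by a fixed vector of `f`
  have hfix : f (x - x') = x - x' := by
    rw [map_sub]
    exact sub_eq_sub_iff_sub_eq_sub.mp h
  have h0 := key (x - x') hfix b hb
  rw [map_sub, LinearMap.sub_apply] at h0
  exact sub_eq_zero.mp h0
end

section
/- Let f be a symplectic automorphism of a finite-dimensional symplectic vector space (V, ω) over ℚ. Then the kernel of f − 1 is exactly the orthogonal complement ((f − 1)V)^⊥ of the image of f − 1 with respect to ω. Consequently, Turaev's form ⋆_f is a nonsingular bilinear form on (f − 1)V: if a ∈ (f − 1)V satisfies a ⋆_f b = 0 for all b ∈ (f − 1)V, then a = 0. -/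
/-!
Since `f` preserves `ω`, one has `ω(x, (f − 1)y) = ω(x, f y) − ω(f x, f y) = −ω((f − 1)x, f y)`.
As `f` is surjective and `ω` is nondegenerate, `x` is orthogonal to the image of `f − 1` exactly
when `(f − 1)x = 0`. Both the description of the kernel and the nonsingularity of Turaev's form
are restatements of this equivalence.
-/

open Module

/-- For a symplectic automorphism `f` of a finite-dimensional symplectic `ℚ`-vector space,
`ker(f − 1) = ((f − 1)V)^⊥`, and consequently Turaev's form
`a ⋆_f b = ω((f−1)⁻¹ a, b)` on `(f − 1)V` is nonsingular: if `a = (f−1)x` pairs to zero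
with every `b ∈ (f − 1)V`, then `a = 0`. -/
theorem turaev_form_nonsingular
    {V : Type*} [AddCommGroup V] [Module ℚ V] [FiniteDimensional ℚ V]
    (ω : LinearMap.BilinForm ℚ V)
    (hnd : ∀ x : V, (∀ y : V, ω x y = 0) → x = 0)
    (halt : ∀ x : V, ω x x = 0)
    (f : V ≃ₗ[ℚ] V)
    (hf : ∀ x y : V, ω (f x) (f y) = ω x y) :
    LinearMap.ker ((f : V →ₗ[ℚ] V) - LinearMap.id)
        = perp ω (LinearMap.range ((f : V →ₗ[ℚ] V) - LinearMap.id)) ∧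
    (∀ a x : V, f x - x = a →
      (∀ b ∈ LinearMap.range ((f : V →ₗ[ℚ] V) - LinearMap.id), ω x b = 0) →
      a = 0) := by
  have key : ∀ x : V,
      (∀ b ∈ LinearMap.range ((f : V →ₗ[ℚ] V) - LinearMap.id), ω x b = 0) ↔ f x - x = 0 := by
    intro x
    have adj : ∀ y : V, ω x (f y - y) = -ω (f x - x) (f y) := by
      intro y
      rw [map_sub, map_sub, LinearMap.sub_apply, hf, neg_sub]
    constructor
    · intro h
      refine hnd _ fun z => ?_
      have h0 : ω x (f (f.symm z) - f.symm z) = 0 := h _ ⟨f.symm z, by simp⟩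
      rw [adj, f.apply_symm_apply] at h0
      exact neg_eq_zero.mp h0
    · rintro h _ ⟨y, rfl⟩
      have h0 := adj y
      rw [h] at h0
      simpa using h0
  refine ⟨?_, fun a x ha h => ha ▸ (key x).mp h⟩
  ext x
  exact (key x).symm
end

section
/- Let f be a symplectic automorphism of a finite-dimensional symplectic vector space (V, ω) over ℚ and let λ be a lagrangian subspace of V. If x, y ∈ V satisfy (f − 1)x ∈ λ and (f − 1)y ∈ λ, then ω(x, (f − 1)y) = ω(y, (f − 1)x). In other words, the restriction ⋆_{f,λ} of Turaev's form ⋆_f to λ ∩ (f − 1)V is a symmetric bilinear form. -/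
open Module

/-- For a symplectic automorphism `f` of a finite-dimensional symplectic `ℚ`-vector space
and a lagrangian `λ`: if `(f − 1)x ∈ λ` and `(f − 1)y ∈ λ`, then
`ω(x, (f − 1)y) = ω(y, (f − 1)x)`. That is, the restriction `⋆_{f,λ}` of Turaev's form
`⋆_f` to `λ ∩ (f − 1)V` is symmetric. -/
theorem turaev_form_symmetric_on_lagrangian
    {V : Type*} [AddCommGroup V] [Module ℚ V] [FiniteDimensional ℚ V]
    (ω : LinearMap.BilinForm ℚ V)
    (hnd : ∀ x : V, (∀ y : V, ω x y = 0) → x = 0)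
    (halt : ∀ x : V, ω x x = 0)
    (f : V ≃ₗ[ℚ] V)
    (hf : ∀ x y : V, ω (f x) (f y) = ω x y)
    (lam : Submodule ℚ V) (hlam : lam = perp ω lam)
    (x y : V) (hx : f x - x ∈ lam) (hy : f y - y ∈ lam) :
    ω x (f y - y) = ω y (f x - x) := by
  -- `λ` is isotropic, so the vectors `(f − 1)x` and `(f − 1)y` are `ω`-orthogonal; expanding
  -- this with `ω(f x, f y) = ω(x, y)` and skew-symmetry gives the claim.
  have h0 : ω (f x - x) (f y - y) = 0 := by
    have hx' : f x - x ∈ perp ω lam := hlam ▸ hx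
    exact hx' _ hy
  have skew : ∀ a b : V, ω b a = -ω a b := by
    intro a b
    have h := halt (a + b)
    simp only [map_add, LinearMap.add_apply, halt] at h
    linarith
  simp only [map_sub, LinearMap.sub_apply, hf] at h0 ⊢
  rw [skew (f x) y, skew x y]
  linarith
end

section
/- Let f be a symplectic automorphism of a finite-dimensional symplectic vector space (V, ω) over ℚ and let λ be a lagrangian subspace. Let a ∈ λ ∩ (f − 1)V and let x ∈ V satisfy (f − 1)x = a. Then ω(x, b) = 0 for all b ∈ λ ∩ (f − 1)V if and only if a lies in the image (f − 1)(λ) of λ under f − 1. In other words, the radical of the symmetric form ⋆_{f,λ} on λ ∩ (f − 1)V equals λ ∩ (f − 1)(λ). -/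
/-!
Write `R` and `K` for the range and the kernel of `f - 1`. Invariance of `ω` under `f` together with
nondegeneracy gives `Rᗮ = K`, hence `R = Kᗮ` (`orthogonal_range_sub_id`, and double orthogonals).
As `lam` is lagrangian, `lam ⊓ R = lamᗮ ⊓ Kᗮ = (lam ⊔ K)ᗮ`, so `x` is orthogonal to `lam ⊓ R`
exactly when `x ∈ lam ⊔ K`, that is, when `(f - 1) x ∈ (f - 1) lam`.
-/

open Module

/-- The orthogonal of the range of `f - 1` is its kernel: `ω (f z - z) y = ω (f z) (y - f y)`. -/
lemma orthogonal_range_sub_id {V : Type*} [AddCommGroup V] [Module ℚ V]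
    (ω : LinearMap.BilinForm ℚ V) (hnd : ω.Nondegenerate)
    (f : V ≃ₗ[ℚ] V) (hf : ∀ x y : V, ω (f x) (f y) = ω x y) :
    ω.orthogonal (LinearMap.range ((f : V →ₗ[ℚ] V) - LinearMap.id)) =
      LinearMap.ker ((f : V →ₗ[ℚ] V) - LinearMap.id) := by
  have key : ∀ z y : V, ω (f z - z) y = - ω (f z) (f y - y) := by
    intro z y
    simp [hf]
  ext y
  constructor
  · intro hy
    rw [LinearMap.mem_ker]
    refine hnd.2 _ fun w => ?_
    obtain ⟨z, rfl⟩ := f.surjective w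
    have h : ω (f z - z) y = 0 := hy _ ⟨z, by simp⟩
    rw [key, neg_eq_zero] at h
    exact h
  · rintro hy _ ⟨z, rfl⟩
    have h : f y - y = 0 := by simpa using hy
    have := key z y
    rw [h, map_zero, neg_zero] at this
    exact this

/-- For a symplectic automorphism `f` of a finite-dimensional symplectic `ℚ`-vector space,
a lagrangian `λ`, an element `a ∈ λ ∩ (f − 1)V` and `x` with `(f − 1)x = a`:
`ω(x, b) = 0` for all `b ∈ λ ∩ (f − 1)V` if and only if `a ∈ (f − 1)(λ)`.
That is, the radical of the symmetric form `⋆_{f,λ}` on `λ ∩ (f − 1)V` is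
`λ ∩ (f − 1)(λ)`. -/
theorem radical_of_turaev_form_on_lagrangian
    {V : Type*} [AddCommGroup V] [Module ℚ V] [FiniteDimensional ℚ V]
    (ω : LinearMap.BilinForm ℚ V)
    (hnd : ∀ x : V, (∀ y : V, ω x y = 0) → x = 0)
    (halt : ∀ x : V, ω x x = 0)
    (f : V ≃ₗ[ℚ] V)
    (hf : ∀ x y : V, ω (f x) (f y) = ω x y)
    (lam : Submodule ℚ V) (hlam : lam = perp ω lam)
    (a x : V)
    (ha : a ∈ lam ⊓ LinearMap.range ((f : V →ₗ[ℚ] V) - LinearMap.id))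
    (hx : f x - x = a) :
    (∀ b ∈ lam ⊓ LinearMap.range ((f : V →ₗ[ℚ] V) - LinearMap.id), ω x b = 0) ↔
      a ∈ Submodule.map ((f : V →ₗ[ℚ] V) - LinearMap.id) lam := by
  have hrefl : ω.IsRefl := (show ω.IsAlt from halt).isRefl
  have hnd' : ω.Nondegenerate :=
    ⟨hnd, fun y hy => hnd y fun x => hrefl _ _ (hy x)⟩
  have hK := orthogonal_range_sub_id ω hnd' f hf
  have hR := LinearMap.BilinForm.orthogonal_orthogonal hnd' hrefl
    (LinearMap.range ((f : V →ₗ[ℚ] V) - LinearMap.id))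
  rw [hK] at hR
  have hx' : ((f : V →ₗ[ℚ] V) - (LinearMap.id : V →ₗ[ℚ] V)) x = a := by simpa using hx
  constructor
  · intro h
    have hmem : x ∈ lam ⊔ LinearMap.ker ((f : V →ₗ[ℚ] V) - LinearMap.id) := by
      rw [← LinearMap.BilinForm.orthogonal_orthogonal hnd' hrefl
        (lam ⊔ LinearMap.ker ((f : V →ₗ[ℚ] V) - LinearMap.id))]
      intro b hb
      refine hrefl _ _ (h b ⟨?_, ?_⟩)
      · rw [hlam]
        exact fun y hy => hrefl _ _ (hb y (Submodule.mem_sup_left hy))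
      · rw [← hR]
        exact fun y hy => hb y (Submodule.mem_sup_right hy)
    obtain ⟨l, hl, k, hk, rfl⟩ := Submodule.mem_sup.1 hmem
    refine ⟨l, hl, ?_⟩
    rw [← hx', map_add, LinearMap.mem_ker.1 hk, add_zero]
  · rintro ⟨l, hl, hla⟩ b ⟨hb, hbR⟩
    have hk : x - l ∈ LinearMap.ker ((f : V →ₗ[ℚ] V) - LinearMap.id) := by
      rw [LinearMap.mem_ker, map_sub, hx', hla, sub_self]
    rw [← hK] at hk
    have h1 : ω (x - l) b = 0 := hrefl _ _ (hk b hbR)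
    have h2 : ω l b = 0 := by
      rw [hlam] at hl
      exact hl b hb
    rw [map_sub, LinearMap.sub_apply, h2, sub_zero] at h1
    exact h1
end

section
/- Let f be a symplectic automorphism of a finite-dimensional symplectic vector space (V, ω) over ℚ and let λ be a lagrangian subspace. Then λ ∩ ker(f − 1) = (λ + (f − 1)V)^⊥, and consequently dim(λ ∩ ker(f − 1)) ≡ dim(λ + (f − 1)V) (mod 2). -/
/-!
If `f x = x` then `ω x (f z - z) = ω (f x) (f z) - ω x z = 0`, and conversely, if
`ω x (f z - z) = 0` for all `z`, then `ω (f x - x) (f z) = ω x z - ω x (f z) = 0`, so `f x = x`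
because `f` is onto and `ω` is nondegenerate. Together with `λ = λ^⊥` this is the equality of
subspaces. For the congruence, `dim W^⊥ + dim W = dim V` for every subspace `W`; applied to `λ`
this shows that `dim V = 2 dim λ` is even, and applied to `λ + (f - 1)V` it gives the claim.
-/

open Module

theorem finrank_perp_add {V : Type*} [AddCommGroup V] [Module ℚ V] [FiniteDimensional ℚ V]
    (ω : LinearMap.BilinForm ℚ V)
    (hnd : ∀ x : V, (∀ y : V, ω x y = 0) → x = 0)
    (halt : ∀ x : V, ω x x = 0) (W : Submodule ℚ V) :
    finrank ℚ (perp ω W) + finrank ℚ W = finrank ℚ V := by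
  have ha : LinearMap.IsAlt ω := halt
  have hperp : perp ω W = LinearMap.BilinForm.orthogonal ω W := by
    ext x
    exact forall₂_congr fun y _ => LinearMap.BilinForm.IsAlt.eq_iff ha
  have hN : LinearMap.BilinForm.Nondegenerate ω :=
    ha.isRefl.nondegenerate_iff_separatingLeft.2 hnd
  have h := LinearMap.BilinForm.finrank_orthogonal hN W
  have := W.finrank_le
  rw [hperp]
  omega

/-- For a symplectic automorphism `f` of a finite-dimensional symplectic `ℚ`-vector space
and a lagrangian `λ`: `λ ∩ ker(f − 1) = (λ + (f − 1)V)^⊥`, and consequently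
`dim(λ ∩ ker(f − 1)) ≡ dim(λ + (f − 1)V) (mod 2)`. -/
theorem lagrangian_cap_ker_eq_perp
    {V : Type*} [AddCommGroup V] [Module ℚ V] [FiniteDimensional ℚ V]
    (ω : LinearMap.BilinForm ℚ V)
    (hnd : ∀ x : V, (∀ y : V, ω x y = 0) → x = 0)
    (halt : ∀ x : V, ω x x = 0)
    (f : V ≃ₗ[ℚ] V)
    (hf : ∀ x y : V, ω (f x) (f y) = ω x y)
    (lam : Submodule ℚ V) (hlam : lam = perp ω lam) :
    lam ⊓ LinearMap.ker ((f : V →ₗ[ℚ] V) - LinearMap.id)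
        = perp ω (lam ⊔ LinearMap.range ((f : V →ₗ[ℚ] V) - LinearMap.id)) ∧
    finrank ℚ ↥(lam ⊓ LinearMap.ker ((f : V →ₗ[ℚ] V) - LinearMap.id))
        ≡ finrank ℚ ↥(lam ⊔ LinearMap.range ((f : V →ₗ[ℚ] V) - LinearMap.id)) [MOD 2] := by
  have hcap : lam ⊓ LinearMap.ker ((f : V →ₗ[ℚ] V) - LinearMap.id)
      = perp ω (lam ⊔ LinearMap.range ((f : V →ₗ[ℚ] V) - LinearMap.id)) := by
    ext x
    constructor
    · rintro ⟨hx, hfx⟩ y hy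
      have hfx' : f x = x := by simpa [sub_eq_zero] using hfx
      obtain ⟨a, ha, b, ⟨z, rfl⟩, rfl⟩ := Submodule.mem_sup.1 hy
      have hxa : ω x a = 0 := by
        rw [hlam] at hx
        exact hx a ha
      have hz := hf x z
      rw [hfx'] at hz
      simp [hxa, hz]
    · intro h
      refine ⟨?_, ?_⟩
      · rw [hlam]
        exact fun y hy => h y (Submodule.mem_sup_left hy)
      · have hfix : f x - x = 0 := by
          refine hnd _ fun y => ?_
          obtain ⟨z, rfl⟩ := f.surjective y
          have hz : ω x (f z - z) = 0 :=
            h (f z - z) (Submodule.mem_sup_right ⟨z, by simp⟩)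
          rw [map_sub] at hz
          rw [map_sub, LinearMap.sub_apply, hf]
          linarith
        simpa using hfix
  refine ⟨hcap, ?_⟩
  have h₁ := finrank_perp_add ω hnd halt lam
  have h₂ := finrank_perp_add ω hnd halt
    (lam ⊔ LinearMap.range ((f : V →ₗ[ℚ] V) - LinearMap.id))
  rw [← hlam] at h₁
  rw [← hcap] at h₂
  rw [Nat.ModEq]
  omega
end

section
/- Let f be a symplectic automorphism of a finite-dimensional real symplectic vector space (V, ω) and let λ be a lagrangian subspace. Then Signature(⋆_{f,λ}) + dim((f − 1)V) ≡ dim λ + dim(λ ∩ f(λ)) (mod 2), where ⋆_{f,λ} is the restriction of Turaev's form ⋆_f to λ ∩ (f − 1)V. -/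
/-!
Write `g = f - 1`, `R = range g`, `W = λ ∩ R`, and let `⊥` denote the `ω`-orthogonal. The signature of
a symmetric form has the parity of its rank, so it suffices to compute the radical of `⋆_{f,λ}`.

Since `f` preserves `ω`, one has `R^⊥ = ker g`, whence `W^⊥ = λ + ker g` and `(λ + R)^⊥ = λ ∩ ker g`.
If `a = g x ∈ W`, then `a` is in the radical iff `x ∈ W^⊥ = λ + ker g`, so the radical is `λ ∩ g λ`.
This is the image under `g` of `λ ∩ f⁻¹ λ ≅ λ ∩ f λ`, and the kernel of `g` there is `λ ∩ ker g`; so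
`dim (λ ∩ g λ) = dim (λ ∩ f λ) - dim (λ ∩ ker g)`. On the other hand,
`dim W = dim λ + dim R - dim V + dim (λ ∩ ker g)`. As `dim V = 2 dim λ` is even, the rank
`dim W - dim (λ ∩ g λ)` is congruent to `dim λ + dim R + dim (λ ∩ f λ)` modulo 2.
-/

open Module

/-- `B` is Turaev's form `⋆_{f,λ}` on `λ ∩ (f − 1)V`:
`B a b = ω(x, b)` for any `x` with `(f − 1)x = a`. -/
def IsTuraevLambdaForm {V : Type*} [AddCommGroup V] [Module ℝ V]
    (ω : LinearMap.BilinForm ℝ V) (f : V ≃ₗ[ℝ] V) (lam : Submodule ℝ V)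
    (B : LinearMap.BilinForm ℝ
      ↥(lam ⊓ LinearMap.range ((f : V →ₗ[ℝ] V) - LinearMap.id))) : Prop :=
  ∀ (a b : ↥(lam ⊓ LinearMap.range ((f : V →ₗ[ℝ] V) - LinearMap.id))) (x : V),
    f x - x = (a : V) → B a b = ω x (b : V)

/-- `s` is the signature of Turaev's symmetric form `⋆_{f,λ}` on `λ ∩ (f − 1)V`. -/
def HasTuraevLambdaSignature {V : Type*} [AddCommGroup V] [Module ℝ V]
    (ω : LinearMap.BilinForm ℝ V) (f : V ≃ₗ[ℝ] V) (lam : Submodule ℝ V)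
    (s : ℤ) : Prop :=
  ∃ B, IsTuraevLambdaForm ω f lam B ∧ HasSignature B s

/-- The signature of a form has the same parity as its rank. -/
lemma HasSignature.modEq_rank {W : Type*} [AddCommGroup W] [Module ℝ W]
    {B : LinearMap.BilinForm ℝ W} {s : ℤ} (h : HasSignature B s) :
    s ≡ (finrank ℝ (LinearMap.range B) : ℤ) [ZMOD 2] := by
  classical
  obtain ⟨n, b, hb, rfl⟩ := h
  have hM : LinearMap.toMatrix b b.dualBasis B = Matrix.diagonal fun i => B (b i) (b i) := by
    ext i j
    rw [LinearMap.toMatrix_apply, Basis.dualBasis_repr, Matrix.diagonal_apply]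
    split_ifs with hij
    · rw [hij]
    · exact hb j i (Ne.symm hij)
  have hr : finrank ℝ (LinearMap.range B) = Fintype.card {i // B (b i) (b i) ≠ 0} := by
    rw [← Matrix.rank_diagonal, ← hM, Matrix.rank_eq_finrank_range_toLin _ b.dualBasis b,
      Matrix.toLin_toMatrix]
  have hc : Fintype.card {i // B (b i) (b i) ≠ 0} =
      Fintype.card {i // 0 < B (b i) (b i)} + Fintype.card {i // B (b i) (b i) < 0} := by
    rw [← Fintype.card_subtype_or_disjoint]
    · exact Fintype.card_congr (Equiv.subtypeEquivRight fun i => by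
        rw [ne_iff_lt_or_gt, or_comm])
    · rw [Pi.disjoint_iff]
      intro i
      rw [Prop.disjoint_iff]
      exact not_and_of_not_or_not (by
        by_contra! h
        exact lt_asymm h.1 h.2)
  rw [hr, hc, Nat.card_eq_fintype_card, Nat.card_eq_fintype_card, Int.ModEq]
  push_cast
  omega

lemma finrank_map_add_finrank_inf_ker {V : Type*} [AddCommGroup V] [Module ℝ V]
    [FiniteDimensional ℝ V] (g : V →ₗ[ℝ] V) (S : Submodule ℝ V) :
    finrank ℝ (S.map g) + finrank ℝ ↥(S ⊓ LinearMap.ker g) = finrank ℝ S := by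
  have h := (g.domRestrict S).finrank_range_add_finrank_ker
  rw [LinearMap.range_domRestrict, LinearMap.ker_domRestrict] at h
  rw [← h, ← Submodule.finrank_map_subtype_eq S ((LinearMap.ker g).comap S.subtype),
    Submodule.map_comap_subtype]

/-- `f - 1` maps `λ ∩ f⁻¹ λ`, a copy of `λ ∩ f λ`, onto `λ ∩ (f - 1) λ`; the kernel of this map is
the space of vectors of `λ` fixed by `f`. -/
lemma finrank_inf_map_sub_id {V : Type*} [AddCommGroup V] [Module ℝ V]
    [FiniteDimensional ℝ V] (f : V ≃ₗ[ℝ] V) (lam : Submodule ℝ V) :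
    finrank ℝ ↥(lam ⊓ lam.map ((f : V →ₗ[ℝ] V) - LinearMap.id))
      + finrank ℝ ↥(lam ⊓ LinearMap.ker ((f : V →ₗ[ℝ] V) - LinearMap.id))
      = finrank ℝ ↥(lam ⊓ lam.map (f : V →ₗ[ℝ] V)) := by
  set S := lam ⊓ lam.comap (f : V →ₗ[ℝ] V) with hS
  have h1 : S.map ((f : V →ₗ[ℝ] V) - LinearMap.id)
      = lam ⊓ lam.map ((f : V →ₗ[ℝ] V) - LinearMap.id) := by
    ext y
    constructor
    · rintro ⟨x, ⟨hx, hx'⟩, rfl⟩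
      exact ⟨lam.sub_mem hx' hx, x, hx, rfl⟩
    · rintro ⟨hy, x, hx, rfl⟩
      refine ⟨x, ⟨hx, ?_⟩, rfl⟩
      simpa using lam.add_mem hy hx
  have h2 : S ⊓ LinearMap.ker ((f : V →ₗ[ℝ] V) - LinearMap.id)
      = lam ⊓ LinearMap.ker ((f : V →ₗ[ℝ] V) - LinearMap.id) := by
    ext x
    constructor
    · rintro ⟨⟨hx, -⟩, hk⟩
      exact ⟨hx, hk⟩
    · rintro ⟨hx, hk⟩
      have hfx : f x = x := by simpa [sub_eq_zero] using hk
      refine ⟨⟨hx, ?_⟩, hk⟩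
      simpa [hfx] using hx
  have h3 : S.map (f : V →ₗ[ℝ] V) = lam ⊓ lam.map (f : V →ₗ[ℝ] V) := by
    ext y
    constructor
    · rintro ⟨x, ⟨hx, hx'⟩, rfl⟩
      exact ⟨hx', x, hx, rfl⟩
    · rintro ⟨hy, x, hx, rfl⟩
      exact ⟨x, ⟨hx, hy⟩, rfl⟩
  rw [← h3, ← h1, ← h2, finrank_map_add_finrank_inf_ker]
  exact (LinearEquiv.finrank_map_eq f S).symm

lemma orthogonal_sup_eq {V : Type*} [AddCommGroup V] [Module ℝ V]
    (ω : LinearMap.BilinForm ℝ V) (A C : Submodule ℝ V) :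
    ω.orthogonal (A ⊔ C) = ω.orthogonal A ⊓ ω.orthogonal C := by
  ext x
  simp only [Submodule.mem_inf, LinearMap.BilinForm.mem_orthogonal_iff]
  constructor
  · exact fun h => ⟨fun a ha => h a (Submodule.mem_sup_left ha),
      fun c hc => h c (Submodule.mem_sup_right hc)⟩
  · rintro ⟨h1, h2⟩ n hn
    obtain ⟨a, ha, c, hc, rfl⟩ := Submodule.mem_sup.1 hn
    have := h1 a ha
    have := h2 c hc
    simp_all

/-- For a symplectic automorphism `f` of a finite-dimensional real symplectic vector
space and a lagrangian `λ`:
`Signature(⋆_{f,λ}) + dim((f − 1)V) ≡ dim λ + dim(λ ∩ f(λ)) (mod 2)`. -/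
theorem signature_turaev_lambda_mod_two
    {V : Type*} [AddCommGroup V] [Module ℝ V] [FiniteDimensional ℝ V]
    (ω : LinearMap.BilinForm ℝ V)
    (hnd : ∀ x : V, (∀ y : V, ω x y = 0) → x = 0)
    (halt : ∀ x : V, ω x x = 0)
    (f : V ≃ₗ[ℝ] V)
    (hf : ∀ x y : V, ω (f x) (f y) = ω x y)
    (lam : Submodule ℝ V) (hlam : lam = perp ω lam)
    (s : ℤ) (hs : HasTuraevLambdaSignature ω f lam s) :
    s + (finrank ℝ ↥(LinearMap.range ((f : V →ₗ[ℝ] V) - LinearMap.id)) : ℤ)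
      ≡ (finrank ℝ lam : ℤ)
        + (finrank ℝ ↥(lam ⊓ Submodule.map (f : V →ₗ[ℝ] V) lam) : ℤ) [ZMOD 2] := by
  unfold HasTuraevLambdaSignature IsTuraevLambdaForm at hs
  generalize hg : (f : V →ₗ[ℝ] V) - LinearMap.id = g at hs ⊢
  have hgx : ∀ x, g x = f x - x := fun x => by rw [← hg]; rfl
  obtain ⟨B, hB, hsig⟩ := hs
  have hAlt : ω.IsAlt := halt
  have hRefl : ω.IsRefl := hAlt.isRefl
  have hN : ω.Nondegenerate :=
    ⟨hnd, fun y hy => hnd y fun x => hRefl x y (hy x)⟩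
  have hL : ω.orthogonal lam = lam := by
    conv_rhs => rw [hlam]
    ext x
    exact ⟨fun h y hy => hRefl _ _ (h y hy), fun h y hy => hRefl _ _ (h y hy)⟩
  have hR : ω.orthogonal (LinearMap.range g) = LinearMap.ker g := by
    ext y
    have key : ∀ x, ω (g x) y = - ω (f x) (g y) := fun x => by
      simp [hgx, hf]
    constructor
    · intro h
      refine hnd _ fun z => hRefl _ _ ?_
      have h' : ω (g (f.symm z)) y = 0 := h _ ⟨_, rfl⟩
      rw [key, f.apply_symm_apply, neg_eq_zero] at h'
      exact h'
    · rintro hy _ ⟨x, rfl⟩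
      rw [LinearMap.mem_ker] at hy
      change ω (g x) y = 0
      rw [key, hy, map_zero, neg_zero]
  have hLR : ω.orthogonal (lam ⊔ LinearMap.range g) = lam ⊓ LinearMap.ker g := by
    rw [orthogonal_sup_eq, hL, hR]
  have hW : ω.orthogonal (lam ⊓ LinearMap.range g) = lam ⊔ LinearMap.ker g := by
    rw [← LinearMap.BilinForm.orthogonal_orthogonal hN hRefl (lam ⊔ LinearMap.ker g),
      orthogonal_sup_eq, hL, ← hR, LinearMap.BilinForm.orthogonal_orthogonal hN hRefl]
  have hker : (LinearMap.ker B).map (lam ⊓ LinearMap.range g).subtype = lam ⊓ lam.map g := by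
    ext y
    constructor
    · rintro ⟨a, ha, rfl⟩
      obtain ⟨x, hx⟩ := a.2.2
      refine ⟨a.2.1, ?_⟩
      have hx' : x ∈ ω.orthogonal (lam ⊓ LinearMap.range g) := fun b hb => by
        apply hRefl
        rw [← hB a ⟨b, hb⟩ x ((hgx x).symm.trans hx), LinearMap.mem_ker.1 ha, LinearMap.zero_apply]
      rw [hW] at hx'
      obtain ⟨l, hl, k, hk, rfl⟩ := Submodule.mem_sup.1 hx'
      refine ⟨l, hl, ?_⟩
      rw [map_add, LinearMap.mem_ker.1 hk, add_zero] at hx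
      exact hx
    · rintro ⟨hy, x, hx, rfl⟩
      have hy' : g x ∈ lam ⊓ LinearMap.range g := ⟨hy, LinearMap.mem_range_self g x⟩
      refine ⟨⟨g x, hy'⟩, ?_, rfl⟩
      refine LinearMap.mem_ker.2 (LinearMap.ext fun b => ?_)
      rw [hB _ b x (hgx x).symm, LinearMap.zero_apply]
      rw [← hL] at hx
      exact hRefl _ _ (hx b b.2.1)
  have d1 := hsig.modEq_rank
  have d2 := B.finrank_range_add_finrank_ker
  have d3 := Submodule.finrank_map_subtype_eq _ (LinearMap.ker B)
  rw [hker] at d3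
  have d4 := finrank_inf_map_sub_id f lam
  rw [hg] at d4
  have d5 := Submodule.finrank_sup_add_finrank_inf_eq lam (LinearMap.range g)
  have d6 := LinearMap.BilinForm.finrank_orthogonal hN (lam ⊔ LinearMap.range g)
  have d6' := Submodule.finrank_le (lam ⊔ LinearMap.range g)
  rw [hLR] at d6
  have d7 := LinearMap.BilinForm.finrank_orthogonal hN lam
  have d7' := Submodule.finrank_le lam
  rw [hL] at d7
  rw [Int.ModEq] at d1 ⊢
  omega
end

section
/- Let f and g be symplectic automorphisms of a finite-dimensional symplectic vector space (V, ω) over ℚ. Let a, b ∈ (f − 1)V ∩ (g − 1)V and choose x, x', y, y' ∈ V with (f − 1)x = a, (g − 1)x' = a, (f − 1)y = b, and (g − 1)y' = b. Then ω(x + x' + a, b) = ω(y + y' + b, a). Consequently, the formula a ⋆_{f,g} b = ω((f − 1)^{-1}(a) + (g − 1)^{-1}(a) + a, b) defines a well-defined symmetric bilinear form on (f − 1)V ∩ (g − 1)V. -/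
open Module

/-- The defect from symmetry of `(x, y) ↦ ω(x, (f − 1)y)`, obtained by expanding
`ω(x + a, y + b) = ω(f x, f y) = ω(x, y)`. It depends only on `a = (f − 1)x` and
`b = (f − 1)y`, not on `f`. -/
lemma form_preimage_swap {V : Type*} [AddCommGroup V] [Module ℚ V]
    (ω : LinearMap.BilinForm ℚ V) (halt : ∀ x : V, ω x x = 0) (f : V ≃ₗ[ℚ] V)
    (hf : ∀ x y : V, ω (f x) (f y) = ω x y)
    {a b x y : V} (hx : f x - x = a) (hy : f y - y = b) :
    ω x b = ω y a - ω a b := by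
  have h := hf x y
  rw [sub_eq_iff_eq_add.mp hx, sub_eq_iff_eq_add.mp hy] at h
  simp only [map_add, LinearMap.add_apply] at h
  have hya : -ω y a = ω a y := LinearMap.IsAlt.neg halt y a
  linarith

/-- For symplectic automorphisms `f`, `g` of a finite-dimensional symplectic
`ℚ`-vector space, `a, b ∈ (f − 1)V ∩ (g − 1)V`, and preimages
`(f − 1)x = a`, `(g − 1)x' = a`, `(f − 1)y = b`, `(g − 1)y' = b`, one has
`ω(x + x' + a, b) = ω(y + y' + b, a)`. Consequently
`a ⋆_{f,g} b = ω((f−1)⁻¹ a + (g−1)⁻¹ a + a, b)` is a well-defined symmetric bilinear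
form on `(f − 1)V ∩ (g − 1)V`. -/
theorem turaev_fg_form_symmetric_well_defined
    {V : Type*} [AddCommGroup V] [Module ℚ V] [FiniteDimensional ℚ V]
    (ω : LinearMap.BilinForm ℚ V)
    (hnd : ∀ x : V, (∀ y : V, ω x y = 0) → x = 0)
    (halt : ∀ x : V, ω x x = 0)
    (f g : V ≃ₗ[ℚ] V)
    (hf : ∀ x y : V, ω (f x) (f y) = ω x y)
    (hg : ∀ x y : V, ω (g x) (g y) = ω x y)
    (a b x x' y y' : V)
    (hxa : f x - x = a) (hxa' : g x' - x' = a)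
    (hyb : f y - y = b) (hyb' : g y' - y' = b) :
    ω (x + x' + a) b = ω (y + y' + b) a := by
  -- The two defects contribute `-2 ω(a, b)`, and the extra term `ω(a, b)` of the form
  -- brings this to `-ω(a, b) = ω(b, a)`.
  have h₁ := form_preimage_swap ω halt f hf hxa hyb
  have h₂ := form_preimage_swap ω halt g hg hxa' hyb'
  have hab : -ω a b = ω b a := LinearMap.IsAlt.neg halt a b
  simp only [map_add, LinearMap.add_apply]
  linarith
end
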